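/- arXiv:2306.03832 — 4 statements merged into one kernel-verified Lean document; each statement's English description precedes it below -/
import Mathlib

section
/- For every h with 2 ≤ h ≤ H and all histories σ, σ' ∈ Σ_{h−1}: if the state–action pairs at step h−1 in σ and σ' coincide (i.e., the last records of σ and σ' have the same state component s and the same joint-action component a), then the inducible value sets satisfy 𝒱_h(σ) = 𝒱_h(σ'). -/
open scoped BigOperators

/-- A one-step record `(s, ω, reported ω̃ᴬ, recommended joint action a, played ãᴬ)`. -/
abbrev Rec (S AP AA OP OA : Type) : Type :=
  S × (OP × OA) × OA × (AP × AA) × AA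

/-- Histories: lists of one-step records, with the most recent record first. -/
abbrev Hist (S AP AA OP OA : Type) : Type :=
  List (Rec S AP AA OP OA)

/-- A (history-dependent) policy of the principal: for every past history,
own observation and reported observation of the agent, a probability
distribution over joint actions. -/
def Policy (S AP AA OP OA : Type) [Fintype AP] [Fintype AA] : Type :=
  { π : Hist S AP AA OP OA → OP → OA → AP × AA → ℝ //
    ∀ σ ωP ωA, (∀ a, 0 ≤ π σ ωP ωA a) ∧ ∑ a, π σ ωP ωA a = 1 }

/-- A deviation plan of the agent: a report map and an action map. -/
structure DevPlan (S AP AA OP OA : Type) where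
  rep : Hist S AP AA OP OA → OA → OA
  act : Hist S AP AA OP OA → OA → AA → AA

variable {S AP AA OP OA : Type} [Fintype S] [Fintype AP] [Fintype AA] [Fintype OP]
  [Fintype OA]

/-- The truthful plan `⊥`. -/
def DevPlan.truthful : DevPlan S AP AA OP OA :=
  ⟨fun _ ωA => ωA, fun _ _ aA => aA⟩

/-- The transition distribution `p_{h-1}(· | σ)`: the initial distribution `p0` at the
empty history, and otherwise `p` at index `σ.length` applied to the state–action pair
of the last (most recent) record of `σ`. -/
def pcond (p0 : S × (OP × OA) → ℝ) (p : ℕ → S × (AP × AA) → S × (OP × OA) → ℝ) :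
    Hist S AP AA OP OA → S × (OP × OA) → ℝ
  | [] => p0
  | r :: rest => p (rest.length + 1) (r.1, r.2.2.2.1)

/-- Backward-recursive value with `n` remaining steps (so `n = H - h` at step `h`,
where `h = σ.length + 1`). -/
noncomputable def val (p0 : S × (OP × OA) → ℝ)
    (p : ℕ → S × (AP × AA) → S × (OP × OA) → ℝ)
    (r : ℕ → S → AP × AA → ℝ) (π : Policy S AP AA OP OA) (ρ : DevPlan S AP AA OP OA) :
    ℕ → Hist S AP AA OP OA → ℝ
  | 0, _ => 0
  | n + 1, σ =>
      ∑ x : S × (OP × OA),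
        pcond p0 p σ x *
          ∑ a : AP × AA,
            π.1 σ x.2.1 (ρ.rep σ x.2.2) a *
              (r (σ.length + 1) x.1 (a.1, ρ.act σ x.2.2 a.2) +
                val p0 p r π ρ n ((x.1, x.2, ρ.rep σ x.2.2, a, ρ.act σ x.2.2 a.2) :: σ))

/-- The value function `V_h^{i,π,ρ}(σ)` (for reward function `r` of player `i`). -/
noncomputable def V (H : ℕ) (p0 : S × (OP × OA) → ℝ)
    (p : ℕ → S × (AP × AA) → S × (OP × OA) → ℝ)
    (r : ℕ → S → AP × AA → ℝ) (π : Policy S AP AA OP OA) (ρ : DevPlan S AP AA OP OA)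
    (h : ℕ) (σ : Hist S AP AA OP OA) : ℝ :=
  val p0 p r π ρ (H - h) σ

/-- `ρ` is a best response of the agent to `π` at `(h, σ)`. -/
def IsBR (H : ℕ) (p0 : S × (OP × OA) → ℝ)
    (p : ℕ → S × (AP × AA) → S × (OP × OA) → ℝ)
    (rA : ℕ → S → AP × AA → ℝ) (π : Policy S AP AA OP OA) (ρ : DevPlan S AP AA OP OA)
    (h : ℕ) (σ : Hist S AP AA OP OA) : Prop :=
  ∀ ρ' : DevPlan S AP AA OP OA, V H p0 p rA π ρ' h σ ≤ V H p0 p rA π ρ h σ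

/-- The data `(H, p0, p, rP, rA)` is a valid model: horizon at least 1, `p0` and the
kernels `p_h` (for `1 ≤ h ≤ H-1`) are probability distributions, rewards lie in `[0,1]`
for `1 ≤ h ≤ H`, and step-`H` rewards vanish. -/
def IsModel (H : ℕ) (p0 : S × (OP × OA) → ℝ)
    (p : ℕ → S × (AP × AA) → S × (OP × OA) → ℝ)
    (rP rA : ℕ → S → AP × AA → ℝ) : Prop :=
  1 ≤ H ∧
  (∀ x, 0 ≤ p0 x) ∧ (∑ x, p0 x = 1) ∧
  (∀ h sa, 1 ≤ h → h < H → (∀ x, 0 ≤ p h sa x) ∧ ∑ x, p h sa x = 1) ∧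
  (∀ h s a, 1 ≤ h → h ≤ H →
    rP h s a ∈ Set.Icc (0 : ℝ) 1 ∧ rA h s a ∈ Set.Icc (0 : ℝ) 1) ∧
  (∀ s a, rP H s a = 0 ∧ rA H s a = 0)

/-- The inducible value set `𝒱_h(σ)`. -/
def IndSet (H : ℕ) (p0 : S × (OP × OA) → ℝ)
    (p : ℕ → S × (AP × AA) → S × (OP × OA) → ℝ)
    (rP rA : ℕ → S → AP × AA → ℝ) (h : ℕ) (σ : Hist S AP AA OP OA) : Set (ℝ × ℝ) :=
  { v | ∃ (π : Policy S AP AA OP OA) (ρ : DevPlan S AP AA OP OA),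
      IsBR H p0 p rA π ρ h σ ∧
      v = (V H p0 p rP π ρ h σ, V H p0 p rA π ρ h σ) }

/- With the model and the step fixed, the value at a history `σ` sees the past in three ways only:
through the length of `σ`, through the next transition, and through how the policy and the plan
behave on histories extending `σ`. That behaviour can be prescribed arbitrarily, so whatever is
played after `σ`, deviations included, can be replayed after any other history of the same length
with the same next transition. -/

/-- The policy that `π` induces once `σ` has been played, as a function of the later records only.
It is indexed by the same type of histories, the empty one now standing for `σ`. -/
def Policy.continuation {S AP AA OP OA : Type} [Fintype AP] [Fintype AA]
    (π : Policy S AP AA OP OA) (σ : Hist S AP AA OP OA) : Policy S AP AA OP OA :=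
  ⟨fun l => π.1 (l ++ σ), fun l => π.2 (l ++ σ)⟩

/-- The deviation plan that `ρ` induces once `σ` has been played, as a function of the later
records only. -/
def DevPlan.continuation {S AP AA OP OA : Type}
    (ρ : DevPlan S AP AA OP OA) (σ : Hist S AP AA OP OA) : DevPlan S AP AA OP OA :=
  ⟨fun l => ρ.rep (l ++ σ), fun l => ρ.act (l ++ σ)⟩

theorem Policy.continuation_surjective {S AP AA OP OA : Type} [Fintype AP] [Fintype AA]
    (σ : Hist S AP AA OP OA) :
    Function.Surjective fun π : Policy S AP AA OP OA => π.continuation σ := fun π =>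
  ⟨⟨fun τ => π.1 (τ.rdrop σ.length), fun τ => π.2 (τ.rdrop σ.length)⟩,
    Subtype.ext <| funext fun _ => congrArg π.1 List.rdrop_append_length⟩

theorem DevPlan.continuation_surjective {S AP AA OP OA : Type} (σ : Hist S AP AA OP OA) :
    Function.Surjective fun ρ : DevPlan S AP AA OP OA => ρ.continuation σ := fun ρ =>
  ⟨⟨fun τ => ρ.rep (τ.rdrop σ.length), fun τ => ρ.act (τ.rdrop σ.length)⟩, by
    simp only [DevPlan.continuation, List.rdrop_append_length]⟩

section Transition

variable {S AP AA OP OA : Type} {p0 : S × (OP × OA) → ℝ}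
  {p : ℕ → S × (AP × AA) → S × (OP × OA) → ℝ} {σ σ' : Hist S AP AA OP OA}

theorem pcond_eq_of_head? {c c' : Rec S AP AA OP OA} (hlen : σ.length = σ'.length)
    (hc : σ.head? = some c) (hc' : σ'.head? = some c')
    (hstate : c.1 = c'.1) (haction : c.2.2.2.1 = c'.2.2.2.1) :
    pcond p0 p σ = pcond p0 p σ' := by
  obtain ⟨l, rfl⟩ := List.head?_eq_some_iff.1 hc
  obtain ⟨l', rfl⟩ := List.head?_eq_some_iff.1 hc'
  have hlen_tail : l.length = l'.length := Nat.succ.inj hlen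
  simp only [pcond, hlen_tail, hstate, haction]

theorem pcond_append_congr (hlen : σ.length = σ'.length) (hp : pcond p0 p σ = pcond p0 p σ')
    (l : Hist S AP AA OP OA) : pcond p0 p (l ++ σ) = pcond p0 p (l ++ σ') := by
  cases l with
  | nil => exact hp
  | cons r l => exact pcond_eq_of_head? (by simp [hlen]) rfl rfl rfl rfl

end Transition

section Replay

variable {H h : ℕ} {p0 : S × (OP × OA) → ℝ} {p : ℕ → S × (AP × AA) → S × (OP × OA) → ℝ}
  {π π' : Policy S AP AA OP OA} {ρ ρ' : DevPlan S AP AA OP OA} {σ σ' : Hist S AP AA OP OA}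

theorem val_append_congr (r : ℕ → S → AP × AA → ℝ) (hlen : σ.length = σ'.length)
    (hp : pcond p0 p σ = pcond p0 p σ') (hπ : π.continuation σ = π'.continuation σ')
    (hρ : ρ.continuation σ = ρ'.continuation σ') (n : ℕ) (l : Hist S AP AA OP OA) :
    val p0 p r π ρ n (l ++ σ) = val p0 p r π' ρ' n (l ++ σ') := by
  have hchoice : ∀ l, π.1 (l ++ σ) = π'.1 (l ++ σ') := congrFun (congrArg Subtype.val hπ)
  have hrep : ∀ l, ρ.rep (l ++ σ) = ρ'.rep (l ++ σ') := congrFun (congrArg DevPlan.rep hρ)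
  have hact : ∀ l, ρ.act (l ++ σ) = ρ'.act (l ++ σ') := congrFun (congrArg DevPlan.act hρ)
  induction n generalizing l with
  | zero => rfl
  | succ n ih =>
    simp only [val, pcond_append_congr hlen hp l, List.length_append, hlen, hchoice, hrep, hact,
      ← List.cons_append, ih]

theorem V_congr (r : ℕ → S → AP × AA → ℝ) (hlen : σ.length = σ'.length)
    (hp : pcond p0 p σ = pcond p0 p σ') (hπ : π.continuation σ = π'.continuation σ')
    (hρ : ρ.continuation σ = ρ'.continuation σ') :
    V H p0 p r π ρ h σ = V H p0 p r π' ρ' h σ' :=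
  val_append_congr r hlen hp hπ hρ (H - h) []

theorem IsBR.congr {rA : ℕ → S → AP × AA → ℝ} (hbr : IsBR H p0 p rA π ρ h σ)
    (hlen : σ.length = σ'.length) (hp : pcond p0 p σ = pcond p0 p σ')
    (hπ : π.continuation σ = π'.continuation σ') (hρ : ρ.continuation σ = ρ'.continuation σ') :
    IsBR H p0 p rA π' ρ' h σ' := by
  intro δ'
  obtain ⟨δ, hδ : δ.continuation σ = δ'.continuation σ'⟩ :=
    DevPlan.continuation_surjective σ (δ'.continuation σ')
  calc V H p0 p rA π' δ' h σ' = V H p0 p rA π δ h σ := (V_congr rA hlen hp hπ hδ).symm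
    _ ≤ V H p0 p rA π ρ h σ := hbr δ
    _ = V H p0 p rA π' ρ' h σ' := V_congr rA hlen hp hπ hρ

theorem indSet_subset_of_pcond_eq (rP rA : ℕ → S → AP × AA → ℝ) (hlen : σ.length = σ'.length)
    (hp : pcond p0 p σ = pcond p0 p σ') :
    IndSet H p0 p rP rA h σ ⊆ IndSet H p0 p rP rA h σ' := by
  rintro _ ⟨π, ρ, hbr, rfl⟩
  obtain ⟨π', hπ⟩ := Policy.continuation_surjective σ' (π.continuation σ)
  obtain ⟨ρ', hρ⟩ := DevPlan.continuation_surjective σ' (ρ.continuation σ)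
  exact ⟨π', ρ', hbr.congr hlen hp hπ.symm hρ.symm,
    Prod.ext (V_congr rP hlen hp hπ.symm hρ.symm) (V_congr rA hlen hp hπ.symm hρ.symm)⟩

theorem indSet_depends_only_on_last_state_action_general (rP rA : ℕ → S → AP × AA → ℝ)
    (hlen : σ.length = σ'.length) (hp : pcond p0 p σ = pcond p0 p σ') :
    IndSet H p0 p rP rA h σ = IndSet H p0 p rP rA h σ' :=
  (indSet_subset_of_pcond_eq rP rA hlen hp).antisymm
    (indSet_subset_of_pcond_eq rP rA hlen.symm hp.symm)

end Replay

/-- For `2 ≤ h ≤ H` and histories `σ, σ' ∈ Σ_{h-1}`, if the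
state–action pairs of the last records of `σ` and `σ'` coincide, then the inducible
value sets coincide: `𝒱_h(σ) = 𝒱_h(σ')`. -/
theorem indSet_depends_only_on_last_state_action
    [Nonempty S] [Nonempty AP] [Nonempty AA] [Nonempty OP] [Nonempty OA]
    (H : ℕ) (p0 : S × (OP × OA) → ℝ) (p : ℕ → S × (AP × AA) → S × (OP × OA) → ℝ)
    (rP rA : ℕ → S → AP × AA → ℝ) (hM : IsModel H p0 p rP rA)
    (h : ℕ) (h2 : 2 ≤ h) (hH : h ≤ H)
    (σ σ' : Hist S AP AA OP OA) (hlen : σ.length = h - 1) (hlen' : σ'.length = h - 1)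
    (c c' : Rec S AP AA OP OA) (hc : σ.head? = some c) (hc' : σ'.head? = some c')
    (hstate : c.1 = c'.1) (haction : c.2.2.2.1 = c'.2.2.2.1) :
    IndSet H p0 p rP rA h σ = IndSet H p0 p rP rA h σ' :=
  have hlength : σ.length = σ'.length := hlen.trans hlen'.symm
  indSet_depends_only_on_last_state_action_general rP rA hlength
    (pcond_eq_of_head? hlength hc hc' hstate haction)
end

section
/- Let M > 0 and δ > 0, and let K ⊆ [0, M] × ℝ be a nonempty compact convex subset of ℝ². Let G := { kδ : k ∈ ℕ, kδ ≤ M } ∪ {M}. Let W ⊆ K be a finite set containing: for each w ∈ G with K ∩ ({w} × ℝ) nonempty, a point of K ∩ ({w} × ℝ) with minimal second coordinate and a point with maximal second coordinate; together with a point of K with minimal second coordinate over all of K and a point with maximal second coordinate over all of K. Then the convex hull C of W satisfies C ⊆ K, and for every v ∈ K there exists x ∈ C with x₂ = v₂ and x₁ ≥ v₁ − δ. -/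
/-!
Read `f` as the horizontal and `g` as the vertical coordinate, and fix `v ∈ K`. The segment joining
the lowest and the highest point of `W` contains a point `p` at the height of `v`, and `p` answers
the claim unless it lies more than `δ` to the left of `v`. In that case the horizontal segment from
`p` to `v` stays in `K` and crosses a grid line at distance at most `δ` to the left of `v`; the
extreme points of the slice of `K` along that line belong to `W`, and the segment joining them
contains the desired point.
-/

section OrderedField

variable {𝕜 E : Type*} [Field 𝕜] [LinearOrder 𝕜] [IsStrictOrderedRing 𝕜]

lemma exists_natCast_mul_mem_Icc_sub [FloorSemiring 𝕜] {δ t : 𝕜} (hδ : 0 < δ) (ht : 0 ≤ t) :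
    ∃ k : ℕ, k * δ ∈ Set.Icc (t - δ) t := by
  refine ⟨⌊t / δ⌋₊, ?_, (le_div_iff₀ hδ).1 (Nat.floor_le (div_nonneg ht hδ.le))⟩
  have hlt : t < (⌊t / δ⌋₊ + 1) * δ := (div_lt_iff₀ hδ).1 (Nat.lt_floor_add_one _)
  linarith

variable [AddCommGroup E] [Module 𝕜 E]

lemma exists_mem_apply_eq_of_convex {S : Set E} (hS : Convex 𝕜 S) (f : E →ₗ[𝕜] 𝕜) {a b : E}
    (ha : a ∈ S) (hb : b ∈ S) {t : 𝕜} (hat : f a ≤ t) (htb : t ≤ f b) : ∃ x ∈ S, f x = t :=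
  (hS.linear_image f).ordConnected.out (Set.mem_image_of_mem f ha) (Set.mem_image_of_mem f hb)
    ⟨hat, htb⟩

lemma exists_mem_level_apply_eq_of_convex {S : Set E} (hS : Convex 𝕜 S) (f g : E →ₗ[𝕜] 𝕜)
    {a b : E} (ha : a ∈ S) (hb : b ∈ S) {w t : 𝕜} (haw : f a = w) (hbw : f b = w)
    (hat : g a ≤ t) (htb : t ≤ g b) : ∃ x ∈ S, f x = w ∧ g x = t := by
  have hlevel : Convex 𝕜 (S ∩ {x | f x = w}) := hS.inter (convex_hyperplane f.isLinear w)
  obtain ⟨x, ⟨hxS, hxw⟩, hxt⟩ :=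
    exists_mem_apply_eq_of_convex hlevel g ⟨ha, haw⟩ ⟨hb, hbw⟩ hat htb
  exact ⟨x, hxS, hxw, hxt⟩

theorem convexHull_slice_approx_general (f g : E →ₗ[𝕜] 𝕜) {δ : 𝕜} {K W : Set E} {G : Set 𝕜}
    (hKconv : Convex 𝕜 K) (hWK : W ⊆ K)
    (hG : ∀ v ∈ K, ∃ w ∈ G, w ∈ Set.Icc (f v - δ) (f v))
    (hslice_min : ∀ w ∈ G, (K ∩ {x | f x = w}).Nonempty →
      ∃ x ∈ W, f x = w ∧ ∀ y ∈ K, f y = w → g x ≤ g y)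
    (hslice_max : ∀ w ∈ G, (K ∩ {x | f x = w}).Nonempty →
      ∃ x ∈ W, f x = w ∧ ∀ y ∈ K, f y = w → g y ≤ g x)
    (hglob_min : ∃ x ∈ W, ∀ y ∈ K, g x ≤ g y)
    (hglob_max : ∃ x ∈ W, ∀ y ∈ K, g y ≤ g x) :
    convexHull 𝕜 W ⊆ K ∧
      ∀ v ∈ K, ∃ x ∈ convexHull 𝕜 W, g x = g v ∧ f v - δ ≤ f x := by
  have hCconv : Convex 𝕜 (convexHull 𝕜 W) := convex_convexHull 𝕜 W
  have hWC : W ⊆ convexHull 𝕜 W := subset_convexHull 𝕜 W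
  have hCK : convexHull 𝕜 W ⊆ K := convexHull_min hWK hKconv
  refine ⟨hCK, fun v hv => ?_⟩
  obtain ⟨a, haW, ha⟩ := hglob_min
  obtain ⟨b, hbW, hb⟩ := hglob_max
  obtain ⟨p, hpC, hpv⟩ : ∃ p ∈ convexHull 𝕜 W, g p = g v :=
    exists_mem_apply_eq_of_convex hCconv g (hWC haW) (hWC hbW) (ha v hv) (hb v hv)
  rcases le_or_gt (f v - δ) (f p) with hp | hp
  · exact ⟨p, hpC, hpv, hp⟩
  obtain ⟨w, hwG, hw, hwv⟩ := hG v hv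
  obtain ⟨q, hqK, hqv, hqw⟩ : ∃ q ∈ K, g q = g v ∧ f q = w :=
    exists_mem_level_apply_eq_of_convex hKconv g f (hCK hpC) hv hpv rfl (hp.le.trans hw) hwv
  obtain ⟨c, hcW, hcw, hc⟩ := hslice_min w hwG ⟨q, hqK, hqw⟩
  obtain ⟨d, hdW, hdw, hd⟩ := hslice_max w hwG ⟨q, hqK, hqw⟩
  obtain ⟨x, hxC, hxw, hxq⟩ : ∃ x ∈ convexHull 𝕜 W, f x = w ∧ g x = g q :=
    exists_mem_level_apply_eq_of_convex hCconv f g (hWC hcW) (hWC hdW) hcw hdw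
      (hc q hqK hqw) (hd q hqK hqw)
  exact ⟨x, hxC, hxq.trans hqv, hw.trans_eq hxw.symm⟩

end OrderedField

/-- Slicing approximation of a compact convex set `K ⊆ [0, M] × ℝ`:
if `W ⊆ K` is a finite set containing, for each grid value `w ∈ G` whose slice
`K ∩ ({w} × ℝ)` is nonempty, a point of the slice of minimal and one of maximal second
coordinate, together with points of `K` of globally minimal and maximal second
coordinate, then the convex hull `C` of `W` satisfies `C ⊆ K` and every `v ∈ K` is
matched by some `x ∈ C` with `x₂ = v₂` and `x₁ ≥ v₁ − δ`. -/
theorem convexHull_slice_approx (M δ : ℝ) (hM : 0 < M) (hδ : 0 < δ)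
    (K : Set (ℝ × ℝ)) (hKsub : K ⊆ {x : ℝ × ℝ | x.1 ∈ Set.Icc 0 M})
    (hKne : K.Nonempty) (hKcomp : IsCompact K) (hKconv : Convex ℝ K)
    (G : Set ℝ) (hG : G = {w : ℝ | ∃ k : ℕ, w = k * δ ∧ k * δ ≤ M} ∪ {M})
    (W : Set (ℝ × ℝ)) (hWfin : W.Finite) (hWK : W ⊆ K)
    (hslice_min : ∀ w ∈ G, (K ∩ {x : ℝ × ℝ | x.1 = w}).Nonempty →
      ∃ x ∈ W, x.1 = w ∧ ∀ y ∈ K, y.1 = w → x.2 ≤ y.2)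
    (hslice_max : ∀ w ∈ G, (K ∩ {x : ℝ × ℝ | x.1 = w}).Nonempty →
      ∃ x ∈ W, x.1 = w ∧ ∀ y ∈ K, y.1 = w → y.2 ≤ x.2)
    (hglob_min : ∃ x ∈ W, ∀ y ∈ K, x.2 ≤ y.2)
    (hglob_max : ∃ x ∈ W, ∀ y ∈ K, y.2 ≤ x.2) :
    convexHull ℝ W ⊆ K ∧
      ∀ v ∈ K, ∃ x ∈ convexHull ℝ W, x.2 = v.2 ∧ v.1 - δ ≤ x.1 := by
  refine convexHull_slice_approx_general (.fst ℝ ℝ ℝ) (.snd ℝ ℝ ℝ) hKconv hWK (fun v hv => ?_)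
    hslice_min hslice_max hglob_min hglob_max
  obtain ⟨k, hk⟩ := exists_natCast_mul_mem_Icc_sub hδ (hKsub hv).1
  exact ⟨k * δ, hG ▸ .inl ⟨k, rfl, hk.2.trans (hKsub hv).2⟩, hk⟩
end

section
/- Let K ⊆ ℝ² be a nonempty compact convex set, δ > 0, k ∈ ℤ, and let B := { x ∈ ℝ² : kδ ≤ x₁ ≤ (k+1)δ } be the corresponding band. Let W ⊆ K be a finite set containing: for each w ∈ {kδ, (k+1)δ} with K ∩ ({w} × ℝ) nonempty, a point of K ∩ ({w} × ℝ) with minimal second coordinate and a point with maximal second coordinate; together with a point of K with minimal second coordinate over all of K and a point with maximal second coordinate over all of K. Then for every v ∈ K ∩ B, the set W ∩ B is nonempty and min_{x ∈ W ∩ B} x₂ ≤ v₂ ≤ max_{x ∈ W ∩ B} x₂. -/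
/-!
If a global minimizer `m` of the second coordinate lies outside the band, the segment from `m` to
`v ∈ K ∩ B` stays in the convex set `{x ∈ K | x₂ ≤ v₂}` and crosses a boundary line of the band;
the slice minimizer on that line is therefore no higher than `v`. Order duality gives the upper
bound.
-/

open Set

section

variable {𝕜 E β : Type*} [Field 𝕜] [LinearOrder 𝕜] [IsStrictOrderedRing 𝕜]
  [AddCommMonoid E] [Module 𝕜 E] {K W : Set E} {f : E →ₗ[𝕜] 𝕜} {g : E → β} {a b : 𝕜}

theorem exists_mem_eq_and_le_of_mem_uIcc [LE β] (hg : QuasiconvexOn 𝕜 K g) {p q : E} {r : β} {w : 𝕜}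
    (hpK : p ∈ K) (hp : g p ≤ r) (hqK : q ∈ K) (hq : g q ≤ r) (hw : w ∈ uIcc (f p) (f q)) :
    ∃ y ∈ K, f y = w ∧ g y ≤ r := by
  have himage : (f '' {x ∈ K | g x ≤ r}).OrdConnected := ((hg r).linear_image f).ordConnected
  obtain ⟨y, ⟨hyK, hy⟩, hyw⟩ :=
    himage.uIcc_subset (mem_image_of_mem f ⟨hpK, hp⟩) (mem_image_of_mem f ⟨hqK, hq⟩) hw
  exact ⟨y, hyK, hyw, hy⟩

variable [Preorder β]

theorem exists_mem_band_le (hg : QuasiconvexOn 𝕜 K g) (hWK : W ⊆ K)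
    (hslice : ∀ w ∈ ({a, b} : Set 𝕜), (K ∩ {x | f x = w}).Nonempty →
      ∃ x ∈ W, f x = w ∧ ∀ y ∈ K, f y = w → g x ≤ g y)
    (hglob : ∃ x ∈ W, ∀ y ∈ K, g x ≤ g y) {v : E} (hv : v ∈ K ∩ f ⁻¹' Icc a b) :
    ∃ x ∈ W ∩ f ⁻¹' Icc a b, g x ≤ g v := by
  obtain ⟨hvK, hav, hvb⟩ := hv
  obtain ⟨m, hmW, hm⟩ := hglob
  have hab : a ≤ b := hav.trans hvb
  have hcrossing {w : 𝕜} (hw : w ∈ ({a, b} : Set 𝕜)) (hwI : w ∈ Icc a b)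
      (hwmv : w ∈ uIcc (f m) (f v)) : ∃ x ∈ W ∩ f ⁻¹' Icc a b, g x ≤ g v := by
    obtain ⟨y, hyK, hyw, hyv⟩ :=
      exists_mem_eq_and_le_of_mem_uIcc hg (hWK hmW) (hm v hvK) hvK le_rfl hwmv
    obtain ⟨x, hxW, rfl, hx⟩ := hslice w hw ⟨y, hyK, hyw⟩
    exact ⟨x, ⟨hxW, hwI⟩, (hx y hyK hyw).trans hyv⟩
  rcases lt_or_ge (f m) a with hma | ham
  · exact hcrossing (mem_insert a {b}) (left_mem_Icc.2 hab) (mem_uIcc_of_le hma.le hav)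
  rcases lt_or_ge b (f m) with hbm | hmb
  · exact hcrossing (mem_insert_of_mem a rfl) (right_mem_Icc.2 hab) (mem_uIcc_of_ge hvb hbm.le)
  exact ⟨m, ⟨hmW, ham, hmb⟩, hm v hvK⟩

theorem band_slice_bounds_general (hg : QuasilinearOn 𝕜 K g) (hWK : W ⊆ K)
    (hslice_min : ∀ w ∈ ({a, b} : Set 𝕜), (K ∩ {x | f x = w}).Nonempty →
      ∃ x ∈ W, f x = w ∧ ∀ y ∈ K, f y = w → g x ≤ g y)
    (hslice_max : ∀ w ∈ ({a, b} : Set 𝕜), (K ∩ {x | f x = w}).Nonempty →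
      ∃ x ∈ W, f x = w ∧ ∀ y ∈ K, f y = w → g y ≤ g x)
    (hglob_min : ∃ x ∈ W, ∀ y ∈ K, g x ≤ g y)
    (hglob_max : ∃ x ∈ W, ∀ y ∈ K, g y ≤ g x) {v : E} (hv : v ∈ K ∩ f ⁻¹' Icc a b) :
    (∃ x ∈ W ∩ f ⁻¹' Icc a b, g x ≤ g v) ∧ ∃ x ∈ W ∩ f ⁻¹' Icc a b, g v ≤ g x :=
  ⟨exists_mem_band_le hg.1 hWK hslice_min hglob_min hv,
    exists_mem_band_le (g := OrderDual.toDual ∘ g) hg.2.dual hWK hslice_max hglob_max hv⟩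

end

theorem quasilinearOn_linearMap {𝕜 E β : Type*} [Semiring 𝕜] [PartialOrder 𝕜] [AddCommMonoid E]
    [Module 𝕜 E] [AddCommMonoid β] [PartialOrder β] [IsOrderedAddMonoid β] [Module 𝕜 β]
    [PosSMulMono 𝕜 β] {K : Set E} (hK : Convex 𝕜 K) (g : E →ₗ[𝕜] β) : QuasilinearOn 𝕜 K g :=
  ⟨(g.convexOn hK).quasiconvexOn, (g.concaveOn hK).quasiconcaveOn⟩

/-- Band case-analysis step: let `K ⊆ ℝ²` be nonempty compact convex,
`B` the band `{x : kδ ≤ x₁ ≤ (k+1)δ}`, and `W ⊆ K` a finite set containing slice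
extrema (in the second coordinate) at the two boundary values `kδ, (k+1)δ` whenever the
corresponding slice of `K` is nonempty, together with global extrema of the second
coordinate over `K`. Then for every `v ∈ K ∩ B` the set `W ∩ B` is nonempty and
`min_{x ∈ W ∩ B} x₂ ≤ v₂ ≤ max_{x ∈ W ∩ B} x₂` (expressed by exhibiting witnesses). -/
theorem band_slice_bounds (K : Set (ℝ × ℝ)) (hKne : K.Nonempty)
    (hKcomp : IsCompact K) (hKconv : Convex ℝ K)
    (δ : ℝ) (hδ : 0 < δ) (k : ℤ)
    (B : Set (ℝ × ℝ)) (hB : B = {x : ℝ × ℝ | (k : ℝ) * δ ≤ x.1 ∧ x.1 ≤ ((k : ℝ) + 1) * δ})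
    (W : Set (ℝ × ℝ)) (hWfin : W.Finite) (hWK : W ⊆ K)
    (hslice_min : ∀ w ∈ ({(k : ℝ) * δ, ((k : ℝ) + 1) * δ} : Set ℝ),
      (K ∩ {x : ℝ × ℝ | x.1 = w}).Nonempty →
      ∃ x ∈ W, x.1 = w ∧ ∀ y ∈ K, y.1 = w → x.2 ≤ y.2)
    (hslice_max : ∀ w ∈ ({(k : ℝ) * δ, ((k : ℝ) + 1) * δ} : Set ℝ),
      (K ∩ {x : ℝ × ℝ | x.1 = w}).Nonempty →
      ∃ x ∈ W, x.1 = w ∧ ∀ y ∈ K, y.1 = w → y.2 ≤ x.2)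
    (hglob_min : ∃ x ∈ W, ∀ y ∈ K, x.2 ≤ y.2)
    (hglob_max : ∃ x ∈ W, ∀ y ∈ K, y.2 ≤ x.2) :
    ∀ v ∈ K ∩ B, (W ∩ B).Nonempty ∧
      (∃ x ∈ W ∩ B, x.2 ≤ v.2) ∧ (∃ x ∈ W ∩ B, v.2 ≤ x.2) := by
  subst hB
  intro v hv
  have hbounds := band_slice_bounds_general (f := LinearMap.fst ℝ ℝ ℝ)
    (quasilinearOn_linearMap hKconv (LinearMap.snd ℝ ℝ ℝ)) hWK
    hslice_min hslice_max hglob_min hglob_max hv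
  exact ⟨hbounds.1.imp fun _ hx => hx.1, hbounds⟩
end

section
/- Let m, n ∈ ℕ, let H be a real m × n matrix and b ∈ ℝ^m, and suppose the polyhedron P := { x ∈ ℝⁿ : H x ≤ b } (the inequality holding coordinatewise) is nonempty and bounded. Then for every real number c ≥ 0 and every z ∈ ℝⁿ: H z ≤ c·b if and only if there exists x ∈ P with z = c·x. -/
/-!
For `c > 0`, multiplication by `c` maps `P` onto `{z | H z ≤ c • b}`, with inverse multiplication by
`c⁻¹`. For `c = 0`, the inequality `H z ≤ 0` says that from any point of `P` the whole ray in
direction `z` stays in `P`. Such a `z` lies in the asymptotic cone of `P`, which is trivial because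
`P` is bounded.
-/

open AffineSpace Filter

theorem mem_asymptoticCone_of_frequently_add_smul_mem {k V : Type*} [Field k] [LinearOrder k]
    [IsStrictOrderedRing k] [TopologicalSpace k] [OrderTopology k] [AddCommGroup V] [Module k V]
    [TopologicalSpace V] [IsTopologicalAddGroup V] [ContinuousSMul k V] {s : Set V} {x v : V}
    (h : ∃ᶠ t : k in atTop, x + t • v ∈ s) : v ∈ asymptoticCone k s := by
  have hray : Tendsto (fun t : k ↦ x + t • v) atTop (asymptoticNhds k V v) :=
    (tendsto_id.atTop_smul_const_tendsto_asymptoticNhds v).const_vadd_asymptoticNhds x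
  exact hray.frequently h

section LinearInequality

variable {k V W : Type*} [AddCommGroup V] [AddCommGroup W] [PartialOrder W]

theorem map_add_smul_le_of_map_nonpos [Ring k] [PartialOrder k] [Module k V] [Module k W]
    [IsOrderedAddMonoid W] [PosSMulMono k W] (f : V →ₗ[k] W) {b : W} {x v : V} {t : k}
    (hx : f x ≤ b) (hv : f v ≤ 0) (ht : 0 ≤ t) : f (x + t • v) ≤ b :=
  calc
    f (x + t • v) = f x + t • f v := by rw [map_add, map_smul]
    _ ≤ b + 0 := add_le_add hx (smul_nonpos_of_nonneg_of_nonpos ht hv)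
    _ = b := add_zero b

variable [Field k] [LinearOrder k] [IsStrictOrderedRing k] [Module k V] [Module k W]
  [PosSMulMono k W]

theorem map_le_smul_iff_exists_of_pos (f : V →ₗ[k] W) {b : W} {c : k} (hc : 0 < c) {z : V} :
    f z ≤ c • b ↔ ∃ x, f x ≤ b ∧ z = c • x := by
  constructor
  · intro hz
    refine ⟨c⁻¹ • z, ?_, (smul_inv_smul₀ hc.ne' z).symm⟩
    rwa [map_smul, inv_smul_le_iff_of_pos hc]
  · rintro ⟨x, hx, rfl⟩
    rw [map_smul]
    exact smul_le_smul_of_nonneg_left hx hc.le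

variable [TopologicalSpace k] [OrderTopology k] [TopologicalSpace V] [IsTopologicalAddGroup V]
  [ContinuousSMul k V] [IsOrderedAddMonoid W]

theorem mem_asymptoticCone_of_map_nonpos (f : V →ₗ[k] W) {b : W} (hne : {x | f x ≤ b}.Nonempty)
    {v : V} (hv : f v ≤ 0) : v ∈ asymptoticCone k {x | f x ≤ b} := by
  obtain ⟨x, hx⟩ := hne
  have hray : ∀ᶠ t : k in atTop, x + t • v ∈ {x | f x ≤ b} :=
    (eventually_ge_atTop 0).mono fun t ht ↦ map_add_smul_le_of_map_nonpos f hx hv ht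
  exact mem_asymptoticCone_of_frequently_add_smul_mem hray.frequently

theorem linearization_scaled_polyhedron_general (f : V →ₗ[k] W) {b : W}
    (hne : {x | f x ≤ b}.Nonempty) (hcone : asymptoticCone k {x | f x ≤ b} ⊆ {0}) {c : k}
    (hc : 0 ≤ c) (z : V) : f z ≤ c • b ↔ ∃ x, f x ≤ b ∧ z = c • x := by
  rcases hc.eq_or_lt with rfl | hpos
  · simp only [zero_smul, exists_and_right]
    constructor
    · exact fun hz ↦ ⟨hne, hcone (mem_asymptoticCone_of_map_nonpos f hne hz)⟩
    · rintro ⟨-, rfl⟩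
      rw [map_zero]
  · exact map_le_smul_iff_exists_of_pos f hpos

end LinearInequality

/-- Correctness of the bilinear-term linearization: if the polyhedron
`P = {x : H x ≤ b}` is nonempty and bounded, then for every `c ≥ 0` and every `z`,
`H z ≤ c • b` holds iff `z = c • x` for some `x ∈ P`. -/
theorem linearization_scaled_polyhedron (m n : ℕ)
    (H : Matrix (Fin m) (Fin n) ℝ) (b : Fin m → ℝ)
    (hne : {x : Fin n → ℝ | H.mulVec x ≤ b}.Nonempty)
    (hbd : Bornology.IsBounded {x : Fin n → ℝ | H.mulVec x ≤ b}) :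
    ∀ c : ℝ, 0 ≤ c → ∀ z : Fin n → ℝ,
      (H.mulVec z ≤ c • b ↔ ∃ x : Fin n → ℝ, H.mulVec x ≤ b ∧ z = c • x) := by
  exact fun _ hc z ↦ linearization_scaled_polyhedron_general H.mulVecLin hne
    (asymptoticCone_subset_singleton_of_bounded hbd) hc z
end
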